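/- arXiv:1012.1277 — 2 statements merged into one kernel-verified Lean document; each statement's English description precedes it below -/
import Mathlib

section
/- There exists a constant M > 0 depending only on the dimension n such that for every x₀ ∈ ∂Ω₀, with e = x₀/|x₀|, and every 0 < r ≤ 1/6: if h₊(x₀ − r·e)/r ≥ M, then h₋(x₀ + r·e)/r ≤ 1. -/
open Metric Set

noncomputable def lapl {n : ℕ} (f : EuclideanSpace ℝ (Fin n) → ℝ)
    (x : EuclideanSpace ℝ (Fin n)) : ℝ :=
  ∑ i : Fin n, fderiv ℝ (fun y => fderiv ℝ f y (EuclideanSpace.single i (1:ℝ))) x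
    (EuclideanSpace.single i (1:ℝ))

def IsHarmonicOn {n : ℕ} (f : EuclideanSpace ℝ (Fin n) → ℝ)
    (U : Set (EuclideanSpace ℝ (Fin n))) : Prop :=
  ContDiffOn ℝ 2 f U ∧ ∀ x ∈ U, lapl f x = 0

/-!
Write `u = h₊`, `v = h₋`. The theorem follows from the two-point estimate
`u x ⁺ * v y ⁺ ≤ ‖x - y‖ ^ 2 / δ ^ 2`, taken at the pair `x₀ ∓ r e`, which is `2 r` apart.
To prove the estimate, compare `u x * v y` with `f ‖x - y‖ ^ 2` for a strictly concave `f`. At an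
interior maximum of the quotient, take logarithms and move `x` and `y` simultaneously, `y` along the
mirror image of the motion of `x` in the hyperplane orthogonal to `x - y`. Summing second
derivatives over an orthonormal basis, the motions tangent to the hyperplane keep the distance fixed
and contribute nothing, and the remaining direction forces `f'' ≥ 0`: a contradiction. So the
quotient is largest at a pair with a point on the boundary, where `u x ⁺ * v y ⁺` vanishes or the
points lie at distance at least `δ`, since `∂Ω` stays `δ` away from both spheres. Letting `f` tend
to the identity gives the estimate.
-/

open Filter Topology Laplacian InnerProductSpace
open scoped RealInnerProductSpace

section SecondDerivativeTest

lemma iteratedDeriv_two_nonpos_of_isLocalMax {φ : ℝ → ℝ} {a : ℝ} (hφ : ContinuousAt φ a)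
    (hmax : IsLocalMax φ a) : iteratedDeriv 2 φ a ≤ 0 := by
  rw [iteratedDeriv_succ, iteratedDeriv_one]
  by_contra! hpos
  have hmin : IsLocalMin φ a := isLocalMin_of_deriv_deriv_pos hpos hmax.deriv_eq_zero hφ
  have hconst : φ =ᶠ[𝓝 a] fun _ => φ a := by
    filter_upwards [hmax, hmin] with t using le_antisymm
  simp [hconst.deriv.deriv_eq] at hpos

variable {E : Type*} [NormedAddCommGroup E] [NormedSpace ℝ E] {f : E → ℝ} {x : E}

lemma differentiableAt_fderiv_of_contDiffAt_two (hf : ContDiffAt ℝ 2 f x) :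
    DifferentiableAt ℝ (fderiv ℝ f) x :=
  (hf.fderiv_right (m := 1) (by norm_num)).differentiableAt (by norm_num)

lemma contDiffAt_comp_line {n : WithTop ℕ∞} (hf : ContDiffAt ℝ n f x) (w : E) :
    ContDiffAt ℝ n (fun t : ℝ => f (x + t • w)) 0 := by
  refine ContDiffAt.comp (0 : ℝ) ?_ (by fun_prop)
  simpa using hf

lemma iteratedDeriv_two_comp_line (hf : ContDiffAt ℝ 2 f x) (w : E) :
    iteratedDeriv 2 (fun t : ℝ => f (x + t • w)) 0 = iteratedFDeriv ℝ 2 f x ![w, w] := by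
  have hline (t : ℝ) : HasDerivAt (fun t : ℝ => x + t • w) w t := by
    simpa using ((hasDerivAt_id t).smul_const w).const_add x
  have hderiv : deriv (fun t : ℝ => f (x + t • w)) =ᶠ[𝓝 0] fun t => fderiv ℝ f (x + t • w) w := by
    have hlim : Tendsto (fun t : ℝ => x + t • w) (𝓝 0) (𝓝 x) := by
      simpa using (hline 0).continuousAt.tendsto
    filter_upwards [hlim.eventually (hf.eventually (by simp))] with t ht
    exact ((ht.differentiableAt (by norm_num)).hasFDerivAt.comp_hasDerivAt t (hline t)).deriv
  have hsecond : HasFDerivAt (fderiv ℝ f) (fderiv ℝ (fderiv ℝ f) x) (x + (0 : ℝ) • w) := by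
    simpa using (differentiableAt_fderiv_of_contDiffAt_two hf).hasFDerivAt
  have hcomp : HasDerivAt (fun t : ℝ => fderiv ℝ f (x + t • w) w)
      (fderiv ℝ (fderiv ℝ f) x w w) 0 := by
    have h : HasDerivAt (fun t : ℝ => fderiv ℝ f (x + t • w)) (fderiv ℝ (fderiv ℝ f) x w) 0 :=
      hsecond.comp_hasDerivAt (0 : ℝ) (hline 0)
    simpa using h.clm_apply (hasDerivAt_const (0 : ℝ) w)
  rw [iteratedDeriv_succ, iteratedDeriv_one, hderiv.deriv_eq, hcomp.deriv]
  simp [iteratedFDeriv_two_apply]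

lemma iteratedFDeriv_two_nonpos_of_isLocalMax (hf : ContDiffAt ℝ 2 f x) (hmax : IsLocalMax f x)
    (w : E) : iteratedFDeriv ℝ 2 f x ![w, w] ≤ 0 := by
  rw [← iteratedDeriv_two_comp_line hf]
  refine iteratedDeriv_two_nonpos_of_isLocalMax (contDiffAt_comp_line hf w).continuousAt ?_
  have hmax' : IsLocalMax f (x + (0 : ℝ) • w) := by simpa using hmax
  exact hmax'.comp_continuous (g := fun t : ℝ => x + t • w) (by fun_prop)

end SecondDerivativeTest

section ReflectionCoupling

variable {E : Type*} [NormedAddCommGroup E] [InnerProductSpace ℝ E]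
  {a b : E → ℝ} {F : ℝ → ℝ} {x y : E}

lemma norm_fderiv_eq_abs_deriv_of_isLocalMax (ha : DifferentiableAt ℝ a x)
    (hF : DifferentiableAt ℝ F ‖x - y‖) (hxy : x ≠ y)
    (hmax : IsLocalMax (fun x' => a x' - F ‖x' - y‖) x) :
    ‖fderiv ℝ a x‖ = |deriv F ‖x - y‖| := by
  have : Nontrivial E := ⟨x, y, hxy⟩
  have hnorm : DifferentiableAt ℝ (fun z : E => ‖z‖) (x - y) :=
    (contDiffAt_norm ℝ (sub_ne_zero.2 hxy)).differentiableAt one_ne_zero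
  have hdist : HasFDerivAt (fun x' => ‖x' - y‖) (fderiv ℝ (fun z : E => ‖z‖) (x - y)) x :=
    hnorm.hasFDerivAt.comp x ((hasFDerivAt_id x).sub_const y)
  have hzero := hmax.hasFDerivAt_eq_zero
    (ha.hasFDerivAt.sub (hF.hasDerivAt.comp_hasFDerivAt x hdist))
  rw [sub_eq_zero.1 hzero, norm_smul, norm_fderiv_norm hnorm, mul_one, Real.norm_eq_abs]

lemma norm_fderiv_eq_abs_deriv_of_isLocalMax_prod (ha : DifferentiableAt ℝ a x)
    (hb : DifferentiableAt ℝ b y) (hF : DifferentiableAt ℝ F ‖x - y‖) (hxy : x ≠ y)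
    (hmax : IsLocalMax (fun p : E × E => a p.1 + b p.2 - F ‖p.1 - p.2‖) (x, y)) :
    ‖fderiv ℝ a x‖ = |deriv F ‖x - y‖| ∧ ‖fderiv ℝ b y‖ = |deriv F ‖x - y‖| := by
  constructor
  · refine norm_fderiv_eq_abs_deriv_of_isLocalMax ha hF hxy ?_
    filter_upwards [hmax.comp_continuous (g := fun z => (z, y)) (b := x) (by fun_prop)] with z hz
    simp only [Function.comp] at hz
    linarith
  · rw [norm_sub_rev] at hF ⊢
    refine norm_fderiv_eq_abs_deriv_of_isLocalMax hb hF hxy.symm ?_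
    filter_upwards [hmax.comp_continuous (g := fun z => (x, z)) (b := y) (by fun_prop)] with z hz
    simp only [Function.comp, norm_sub_rev x] at hz
    linarith

-- The reflection reverses `x - y`, so along `(w, R w)` the distance grows affinely in time.
lemma eventually_norm_sub_reflection_line (hxy : x ≠ y) (w : E) :
    ∀ᶠ t in 𝓝 (0 : ℝ), ‖(x + t • w) - (y + t • (ℝ ∙ (x - y))ᗮ.reflection w)‖ =
      ‖x - y‖ + t • (2 * ⟪x - y, w⟫ / ‖x - y‖) := by
  set z := x - y with hz
  have hz0 : ‖z‖ ≠ 0 := norm_ne_zero_iff.2 (sub_ne_zero.2 hxy)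
  have hvec (t : ℝ) : (x + t • w) - (y + t • (ℝ ∙ z)ᗮ.reflection w) =
      (1 + t * (2 * ⟪z, w⟫ / ‖z‖ ^ 2)) • z := by
    rw [Submodule.reflection_orthogonal_apply, Submodule.reflection_singleton_apply,
      RCLike.ofReal_real_eq_id, id, eq_add_of_sub_eq hz.symm]
    module
  have hpos : ∀ᶠ t in 𝓝 (0 : ℝ), 0 < 1 + t * (2 * ⟪z, w⟫ / ‖z‖ ^ 2) :=
    ContinuousAt.eventually_lt (by fun_prop) (by fun_prop) (by simp)
  filter_upwards [hpos] with t ht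
  rw [hvec, norm_smul, Real.norm_of_nonneg ht.le, smul_eq_mul]
  field_simp

lemma iteratedFDeriv_two_add_reflection_le (ha : ContDiffAt ℝ 2 a x) (hb : ContDiffAt ℝ 2 b y)
    (hF : ContDiffAt ℝ 2 F ‖x - y‖) (hxy : x ≠ y)
    (hmax : IsLocalMax (fun p : E × E => a p.1 + b p.2 - F ‖p.1 - p.2‖) (x, y)) (w : E) :
    iteratedFDeriv ℝ 2 a x ![w, w] + iteratedFDeriv ℝ 2 b y
        ![(ℝ ∙ (x - y))ᗮ.reflection w, (ℝ ∙ (x - y))ᗮ.reflection w] ≤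
      4 * iteratedDeriv 2 F ‖x - y‖ / ‖x - y‖ ^ 2 * ⟪x - y, w⟫ ^ 2 := by
  set R := (ℝ ∙ (x - y))ᗮ.reflection
  set k := 2 * ⟪x - y, w⟫ / ‖x - y‖ with hk
  have hca := contDiffAt_comp_line ha w
  have hcb := contDiffAt_comp_line hb (R w)
  have hcF := contDiffAt_comp_line hF k
  have hmaxLine : IsLocalMax ((fun t : ℝ => a (x + t • w)) + (fun t : ℝ => b (y + t • R w)) -
      fun t : ℝ => F (‖x - y‖ + t • k)) 0 := by
    have hlim : Tendsto (fun t : ℝ => (x + t • w, y + t • R w)) (𝓝 0) (𝓝 (x, y)) :=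
      Continuous.tendsto' (by fun_prop) _ _ (by simp)
    filter_upwards [hlim.eventually hmax, eventually_norm_sub_reflection_line hxy w] with t ht hdist
    rw [hdist] at ht
    simpa using ht
  have hle := iteratedDeriv_two_nonpos_of_isLocalMax ((hca.add hcb).sub hcF).continuousAt hmaxLine
  rw [iteratedDeriv_fun_sub (hca.add hcb) hcF, iteratedDeriv_fun_add hca hcb,
    iteratedDeriv_two_comp_line ha, iteratedDeriv_two_comp_line hb,
    iteratedDeriv_two_comp_line hF, iteratedFDeriv_apply_eq_iteratedDeriv_mul_prod] at hle
  calc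
    _ ≤ k ^ 2 * iteratedDeriv 2 F ‖x - y‖ := by simpa [Fin.prod_univ_two, sq] using hle
    _ = 4 * iteratedDeriv 2 F ‖x - y‖ / ‖x - y‖ ^ 2 * ⟪x - y, w⟫ ^ 2 := by
      rw [hk]
      ring

end ReflectionCoupling

section SecondOrder

variable {E : Type*} [NormedAddCommGroup E] [InnerProductSpace ℝ E] [FiniteDimensional ℝ E]

lemma laplacian_nonpos_of_isLocalMax {f : E → ℝ} {x : E} (hf : ContDiffAt ℝ 2 f x)
    (hmax : IsLocalMax f x) : Δ f x ≤ 0 := by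
  rw [laplacian_eq_iteratedFDeriv_stdOrthonormalBasis]
  exact Finset.sum_nonpos fun i _ => iteratedFDeriv_two_nonpos_of_isLocalMax hf hmax _

lemma laplacian_norm_sq (x : E) : Δ (fun y : E => ‖y‖ ^ 2) x = 2 * Module.finrank ℝ E := by
  let B : E →L[ℝ] E →L[ℝ] ℝ := (2 : ℝ) • innerSL ℝ
  have hB (v w : E) : B v w = 2 * ⟪v, w⟫ := rfl
  have hfderiv : fderiv ℝ (fun y : E => ‖y‖ ^ 2) = B := by
    ext y w
    simp [hB, fderiv_norm_sq_apply]
  simp only [laplacian_eq_iteratedFDeriv_stdOrthonormalBasis, iteratedFDeriv_two_apply, hfderiv,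
    ContinuousLinearMap.fderiv]
  simp [hB, mul_comm]

lemma laplacian_log_comp {u : E → ℝ} {x : E} (hu : ContDiffAt ℝ 2 u x) (hx : u x ≠ 0) :
    Δ (fun y => Real.log (u y)) x = Δ u x / u x - ‖fderiv ℝ u x‖ ^ 2 / u x ^ 2 := by
  have hdiff : ∀ᶠ y in 𝓝 x, DifferentiableAt ℝ u y ∧ u y ≠ 0 :=
    ((hu.eventually (by simp)).mono fun y hy => hy.differentiableAt (by norm_num)).and
      (hu.continuousAt.eventually_ne hx)
  have hfderiv : fderiv ℝ (fun y => Real.log (u y)) =ᶠ[𝓝 x] fun y => (u y)⁻¹ • fderiv ℝ u y :=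
    hdiff.mono fun y hy => fderiv.log hy.1 hy.2
  have hdu : HasFDerivAt u (fderiv ℝ u x) x := hdiff.self_of_nhds.1.hasFDerivAt
  have hinv : HasFDerivAt (fun y => (u y)⁻¹) (-(u x ^ 2)⁻¹ • fderiv ℝ u x) x :=
    (hasDerivAt_inv hx).comp_hasFDerivAt x hdu
  have hsecond := hinv.fun_smul (differentiableAt_fderiv_of_contDiffAt_two hu).hasFDerivAt
  have hterm (w : E) : iteratedFDeriv ℝ 2 (fun y => Real.log (u y)) x ![w, w] =
      iteratedFDeriv ℝ 2 u x ![w, w] / u x - fderiv ℝ u x w ^ 2 / u x ^ 2 := by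
    simp only [iteratedFDeriv_two_apply, hfderiv.fderiv_eq, hsecond.fderiv]
    simp only [neg_smul, Matrix.cons_val_zero, add_apply, smul_apply,
      ContinuousLinearMap.smulRight_apply, neg_apply, smul_eq_mul, Matrix.cons_val_one]
    ring
  simp only [laplacian_eq_iteratedFDeriv_stdOrthonormalBasis, hterm]
  rw [Finset.sum_sub_distrib, ← Finset.sum_div, ← Finset.sum_div,
    (stdOrthonormalBasis ℝ E).norm_dual]

theorem laplacian_add_laplacian_le_of_isLocalMax {a b : E → ℝ} {F : ℝ → ℝ} {x y : E}
    (ha : ContDiffAt ℝ 2 a x)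
    (hb : ContDiffAt ℝ 2 b y) (hF : ContDiffAt ℝ 2 F ‖x - y‖) (hxy : x ≠ y)
    (hmax : IsLocalMax (fun p : E × E => a p.1 + b p.2 - F ‖p.1 - p.2‖) (x, y)) :
    Δ a x + Δ b y ≤ 4 * iteratedDeriv 2 F ‖x - y‖ := by
  have hz0 : ‖x - y‖ ≠ 0 := norm_ne_zero_iff.2 (sub_ne_zero.2 hxy)
  let basis := stdOrthonormalBasis ℝ E
  let reflected := basis.map (ℝ ∙ (x - y))ᗮ.reflection
  calc
    Δ a x + Δ b y = ∑ i, (iteratedFDeriv ℝ 2 a x ![basis i, basis i] +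
        iteratedFDeriv ℝ 2 b y ![reflected i, reflected i]) := by
      rw [laplacian_eq_iteratedFDeriv_orthonormalBasis a basis,
        laplacian_eq_iteratedFDeriv_orthonormalBasis b reflected, Finset.sum_add_distrib]
    _ ≤ ∑ i, 4 * iteratedDeriv 2 F ‖x - y‖ / ‖x - y‖ ^ 2 * ⟪x - y, basis i⟫ ^ 2 :=
      Finset.sum_le_sum fun i _ => by
        simpa [reflected] using iteratedFDeriv_two_add_reflection_le ha hb hF hxy hmax (basis i)
    _ = 4 * iteratedDeriv 2 F ‖x - y‖ := by
      rw [← Finset.mul_sum, basis.sum_sq_inner_left]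
      field_simp

lemma isLocalMax_log_add_log_sub_log {X : Type*} [TopologicalSpace X] {g h k : X → ℝ} {x : X}
    (hg : ContinuousAt g x) (hh : ContinuousAt h x) (hk : ContinuousAt k x) (hgx : 0 < g x)
    (hhx : 0 < h x) (hkx : 0 < k x) (hmax : IsLocalMax (fun p => g p * h p / k p ^ 2) x) :
    IsLocalMax (fun p => Real.log (g p) + Real.log (h p) - 2 * Real.log (k p)) x := by
  have hlog {p : X} (hgp : 0 < g p) (hhp : 0 < h p) (hkp : 0 < k p) :
      Real.log (g p) + Real.log (h p) - 2 * Real.log (k p) = Real.log (g p * h p / k p ^ 2) := by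
    rw [Real.log_div (by positivity) (by positivity), Real.log_mul hgp.ne' hhp.ne', Real.log_pow]
    norm_cast
  filter_upwards [hmax, hg.eventually_const_lt hgx, hh.eventually_const_lt hhx,
    hk.eventually_const_lt hkx] with p hp hgp hhp hkp
  rw [hlog hgp hhp hkp, hlog hgx hhx hkx]
  exact Real.log_le_log (by positivity) hp

lemma neg_norm_fderiv_sq_le_laplacian_log_comp {u : E → ℝ} {x : E} (hu : ContDiffAt ℝ 2 u x)
    (hpos : 0 < u x) (hΔ : 0 ≤ Δ u x) :
    -‖fderiv ℝ (fun y => Real.log (u y)) x‖ ^ 2 ≤ Δ (fun y => Real.log (u y)) x := by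
  rw [laplacian_log_comp hu hpos.ne', fderiv.log (hu.differentiableAt two_ne_zero) hpos.ne',
    norm_smul, norm_inv, Real.norm_of_nonneg hpos.le, mul_pow, inv_pow, inv_mul_eq_div]
  linarith [div_nonneg hΔ hpos.le]

lemma iteratedDeriv_two_log_comp {f : ℝ → ℝ} {s : ℝ} (hf : ContDiffAt ℝ 2 f s) (hs : f s ≠ 0) :
    iteratedDeriv 2 (fun t => Real.log (f t)) s =
      iteratedDeriv 2 f s / f s - (deriv f s / f s) ^ 2 := by
  have h := laplacian_log_comp hf hs
  rwa [laplacian_eq_iteratedDeriv_real, laplacian_eq_iteratedDeriv_real,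
    ← norm_deriv_eq_norm_fderiv, Real.norm_eq_abs, sq_abs, ← div_pow] at h

-- With `a = log u`, `b = log v`, `F = 2 log f`, the first-order conditions make the gradient terms
-- in `Δ a + Δ b ≤ 4 F''` cancel exactly, leaving only `f''`.
theorem iteratedDeriv_two_nonneg_of_isLocalMax_mul_div_sq {u v : E → ℝ} {f : ℝ → ℝ} {x y : E}
    (hu : ContDiffAt ℝ 2 u x) (hv : ContDiffAt ℝ 2 v y) (hf : ContDiffAt ℝ 2 f ‖x - y‖)
    (hux : 0 < u x) (hvy : 0 < v y) (hfxy : 0 < f ‖x - y‖) (hxy : x ≠ y) (hΔu : 0 ≤ Δ u x)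
    (hΔv : 0 ≤ Δ v y)
    (hmax : IsLocalMax (fun p : E × E => u p.1 * v p.2 / f ‖p.1 - p.2‖ ^ 2) (x, y)) :
    0 ≤ iteratedDeriv 2 f ‖x - y‖ := by
  set F : ℝ → ℝ := fun s => 2 * Real.log (f s)
  have hlogu := hu.log hux.ne'
  have hlogv := hv.log hvy.ne'
  have hlogf := hf.log hfxy.ne'
  have hF : ContDiffAt ℝ 2 F ‖x - y‖ := contDiffAt_const.mul hlogf
  have hlogmax : IsLocalMax (fun p : E × E =>
      Real.log (u p.1) + Real.log (v p.2) - F ‖p.1 - p.2‖) (x, y) :=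
    isLocalMax_log_add_log_sub_log (hu.continuousAt.comp' (x := (x, y)) continuousAt_fst)
      (hv.continuousAt.comp' (x := (x, y)) continuousAt_snd)
      (ContinuousAt.comp' (f := fun p : E × E => ‖p.1 - p.2‖) hf.continuousAt (by fun_prop))
      hux hvy hfxy hmax
  have hF' : deriv F ‖x - y‖ = 2 * (deriv f ‖x - y‖ / f ‖x - y‖) := by
    rw [deriv_const_mul _ (hlogf.differentiableAt two_ne_zero),
      deriv.log (hf.differentiableAt two_ne_zero) hfxy.ne']
  have hF'' : iteratedDeriv 2 F ‖x - y‖ =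
      2 * (iteratedDeriv 2 f ‖x - y‖ / f ‖x - y‖ - (deriv f ‖x - y‖ / f ‖x - y‖) ^ 2) := by
    rw [iteratedDeriv_const_mul_field, iteratedDeriv_two_log_comp hf hfxy.ne']
  obtain ⟨hgradu, hgradv⟩ := norm_fderiv_eq_abs_deriv_of_isLocalMax_prod
    (hlogu.differentiableAt two_ne_zero) (hlogv.differentiableAt two_ne_zero)
    (hF.differentiableAt two_ne_zero) hxy hlogmax
  have hlapu := neg_norm_fderiv_sq_le_laplacian_log_comp hu hux hΔu
  have hlapv := neg_norm_fderiv_sq_le_laplacian_log_comp hv hvy hΔv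
  have hsum := laplacian_add_laplacian_le_of_isLocalMax hlogu hlogv hF hxy hlogmax
  rw [hgradu, hF', sq_abs] at hlapu
  rw [hgradv, hF', sq_abs] at hlapv
  rw [hF''] at hsum
  have hquot : 0 ≤ iteratedDeriv 2 f ‖x - y‖ / f ‖x - y‖ := by linarith
  simpa [hfxy.ne'] using mul_nonneg hquot hfxy.le

end SecondOrder

section MaximumPrinciple

variable {E : Type*} [NormedAddCommGroup E] [InnerProductSpace ℝ E] [FiniteDimensional ℝ E]

/-- `C²` subharmonicity in `U` with continuity up to the boundary, the class of functions on which
the maximum principles below are stated; compare `InnerProductSpace.HarmonicContOnCl`. -/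
structure SubharmonicContOnCl (u : E → ℝ) (U : Set E) : Prop where
  contDiffAt : ∀ x ∈ U, ContDiffAt ℝ 2 u x
  laplacian_nonneg : ∀ x ∈ U, 0 ≤ Δ u x
  continuousOn : ContinuousOn u (closure U)

lemma mem_of_mem_closure_of_notMem_frontier {X : Type*} [TopologicalSpace X] {s : Set X} {x : X}
    (hs : IsOpen s) (hx : x ∈ closure s) (hx' : x ∉ frontier s) : x ∈ s := by
  by_contra h
  exact hx' (hs.frontier_eq ▸ ⟨hx, h⟩)

theorem SubharmonicContOnCl.le_of_forall_mem_frontier_le [Nontrivial E] {u : E → ℝ} {U : Set E}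
    (hu : SubharmonicContOnCl u U) (hUo : IsOpen U) (hUb : Bornology.IsBounded U) {c : ℝ}
    (hc : ∀ x ∈ frontier U, u x ≤ c) {x : E} (hx : x ∈ closure U) : u x ≤ c := by
  obtain ⟨L, hL⟩ := hUb.closure.exists_norm_le
  suffices h : ∀ ε > 0, u x ≤ c + ε * L ^ 2 by
    have hlim : Tendsto (fun ε => c + ε * L ^ 2) (𝓝[>] 0) (𝓝 c) :=
      (Continuous.tendsto' (by fun_prop) 0 c (by simp)).mono_left nhdsWithin_le_nhds
    exact ge_of_tendsto hlim (eventually_mem_nhdsWithin.mono h)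
  intro ε hε
  obtain ⟨p, hp, hmax⟩ := hUb.isCompact_closure.exists_isMaxOn ⟨x, hx⟩
    (f := u + ε • fun y => ‖y‖ ^ 2) (hu.continuousOn.add (by fun_prop))
  have hpU : p ∈ frontier U := by
    by_contra hpfr
    have hpU := mem_of_mem_closure_of_notMem_frontier hUo hp hpfr
    have hsq : ContDiffAt ℝ 2 (fun y : E => ‖y‖ ^ 2) p := (contDiff_norm_sq ℝ).contDiffAt
    have hεsq : ContDiffAt ℝ 2 (ε • fun y : E => ‖y‖ ^ 2) p := hsq.const_smul ε
    have hle : Δ (u + ε • fun y : E => ‖y‖ ^ 2) p ≤ 0 :=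
      laplacian_nonpos_of_isLocalMax ((hu.contDiffAt p hpU).add hεsq)
        ((hmax.on_subset subset_closure).isLocalMax (hUo.mem_nhds hpU))
    rw [(hu.contDiffAt p hpU).laplacian_add hεsq, laplacian_smul ε hsq, laplacian_norm_sq,
      smul_eq_mul] at hle
    have hdim : (0 : ℝ) < Module.finrank ℝ E := mod_cast Module.finrank_pos
    have hpos : 0 < ε * (2 * Module.finrank ℝ E) := by positivity
    linarith [hu.laplacian_nonneg p hpU]
  calc
    u x ≤ u x + ε * ‖x‖ ^ 2 := le_add_of_nonneg_right (by positivity)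
    _ ≤ u p + ε * ‖p‖ ^ 2 := hmax hx
    _ ≤ c + ε * L ^ 2 := by
      gcongr
      · exact hc p hpU
      · exact hL p hp

/-- The strictly concave perturbation `s + ε (L² - s²)` of the identity on `[0, L]`: it serves as
comparison function in place of `s`, which is only borderline for the two-point principle. -/
def perturbedId (ε L s : ℝ) : ℝ := s + ε * (L ^ 2 - s ^ 2)

lemma contDiff_perturbedId (ε L : ℝ) : ContDiff ℝ 2 (perturbedId ε L) := by
  unfold perturbedId
  fun_prop

lemma le_perturbedId {ε L s : ℝ} (hε : 0 ≤ ε) (hs : 0 ≤ s) (hsL : s ≤ L) :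
    s ≤ perturbedId ε L s :=
  le_add_of_nonneg_right (mul_nonneg hε (sub_nonneg.2 (by gcongr)))

lemma iteratedDeriv_two_perturbedId (ε L s : ℝ) : iteratedDeriv 2 (perturbedId ε L) s = -2 * ε := by
  have hderiv : deriv (perturbedId ε L) = fun t => 1 - ε * (2 * t) := by
    ext t
    have h : HasDerivAt (perturbedId ε L) _ t :=
      (hasDerivAt_id t).add (((hasDerivAt_pow 2 t).const_sub (L ^ 2)).const_mul ε)
    simp [h.deriv, sub_eq_add_neg]
  rw [iteratedDeriv_succ, iteratedDeriv_one, hderiv]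
  simp only [deriv_const_sub', deriv_const_mul_field', deriv_const_mul_id']
  ring

section TwoPoint

variable {u v : E → ℝ} {U V : Set E} {K : ℝ}

lemma continuousOn_posPart_mul_posPart_div_sq {X : Type*} [SeminormedAddCommGroup X] {u v : X → ℝ}
    {U V : Set X} {f : ℝ → ℝ} (hu : ContinuousOn u (closure U)) (hv : ContinuousOn v (closure V))
    (hf : Continuous f) (hfpos : ∀ p ∈ closure (U ×ˢ V), 0 < f ‖p.1 - p.2‖) :
    ContinuousOn (fun p : X × X => (u p.1)⁺ * (v p.2)⁺ / f ‖p.1 - p.2‖ ^ 2)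
      (closure (U ×ˢ V)) := by
  have hmaps : MapsTo Prod.fst (closure (U ×ˢ V)) (closure U) ∧
      MapsTo Prod.snd (closure (U ×ˢ V)) (closure V) := by
    simp +contextual [closure_prod_eq, MapsTo]
  have hu' := (continuous_posPart.comp_continuousOn hu).comp continuousOn_fst hmaps.1
  have hv' := (continuous_posPart.comp_continuousOn hv).comp continuousOn_snd hmaps.2
  have hf' : Continuous fun p : X × X => f ‖p.1 - p.2‖ ^ 2 :=
    (hf.comp (by fun_prop)).pow 2
  exact (hu'.mul hv').div hf'.continuousOn fun p hp => ne_of_gt (pow_pos (hfpos p hp) 2)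

-- Positive parts keep a product of two negative values from being the maximum.
lemma posPart_mul_posPart_le_mul_sq_of_concave {f : ℝ → ℝ} (hu : SubharmonicContOnCl u U)
    (hv : SubharmonicContOnCl v V) (hUo : IsOpen U) (hVo : IsOpen V) (hUb : Bornology.IsBounded U)
    (hVb : Bornology.IsBounded V) (hUV : Disjoint U V) (hf : ContDiff ℝ 2 f)
    (hfpos : ∀ p ∈ closure (U ×ˢ V), 0 < f ‖p.1 - p.2‖) (hf'' : ∀ s, iteratedDeriv 2 f s < 0)
    (hK : 0 ≤ K) (hbd : ∀ p ∈ frontier (U ×ˢ V), (u p.1)⁺ * (v p.2)⁺ ≤ K * f ‖p.1 - p.2‖ ^ 2)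
    {p : E × E} (hp : p ∈ closure (U ×ˢ V)) : (u p.1)⁺ * (v p.2)⁺ ≤ K * f ‖p.1 - p.2‖ ^ 2 := by
  have hcont := continuousOn_posPart_mul_posPart_div_sq hu.continuousOn hv.continuousOn
    hf.continuous hfpos
  obtain ⟨q, hq, hmax⟩ := (hUb.prod hVb).isCompact_closure.exists_isMaxOn ⟨p, hp⟩ hcont
  rw [← div_le_iff₀ (pow_pos (hfpos p hp) 2)]
  refine (hmax hp).trans ?_
  by_contra! hlt
  have hqUV : q ∈ U ×ˢ V := mem_of_mem_closure_of_notMem_frontier (hUo.prod hVo) hq fun hfr =>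
    hlt.not_ge ((div_le_iff₀ (pow_pos (hfpos q hq) 2)).2 (hbd q hfr))
  have hne := hK.trans_lt hlt |>.ne'
  simp only [ne_eq, div_eq_zero_iff, mul_eq_zero, posPart_eq_zero, not_or, not_le] at hne
  obtain ⟨⟨huq, hvq⟩, -⟩ := hne
  have hlocal : IsLocalMax (fun p : E × E => u p.1 * v p.2 / f ‖p.1 - p.2‖ ^ 2) q := by
    filter_upwards [(hmax.on_subset subset_closure).isLocalMax ((hUo.prod hVo).mem_nhds hqUV),
      ((hu.contDiffAt _ hqUV.1).continuousAt.comp' continuousAt_fst).eventually_const_lt huq,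
      ((hv.contDiffAt _ hqUV.2).continuousAt.comp' continuousAt_snd).eventually_const_lt hvq]
      with z hz huz hvz
    simpa only [posPart_eq_self.2 huz.le, posPart_eq_self.2 hvz.le, posPart_eq_self.2 huq.le,
      posPart_eq_self.2 hvq.le] using hz
  exact (hf'' _).not_ge <| iteratedDeriv_two_nonneg_of_isLocalMax_mul_div_sq
    (hu.contDiffAt _ hqUV.1) (hv.contDiffAt _ hqUV.2) hf.contDiffAt huq hvq (hfpos q hq)
    (hUV.ne_of_mem hqUV.1 hqUV.2) (hu.laplacian_nonneg _ hqUV.1)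
    (hv.laplacian_nonneg _ hqUV.2) hlocal

theorem posPart_mul_posPart_le_mul_norm_sub_sq (hu : SubharmonicContOnCl u U)
    (hv : SubharmonicContOnCl v V) (hUo : IsOpen U) (hVo : IsOpen V) (hUb : Bornology.IsBounded U)
    (hVb : Bornology.IsBounded V) (hUV : Disjoint U V) (hK : 0 ≤ K)
    (hbd : ∀ p ∈ frontier (U ×ˢ V), (u p.1)⁺ * (v p.2)⁺ ≤ K * ‖p.1 - p.2‖ ^ 2)
    {p : E × E} (hp : p ∈ closure (U ×ˢ V)) : (u p.1)⁺ * (v p.2)⁺ ≤ K * ‖p.1 - p.2‖ ^ 2 := by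
  obtain ⟨L, hL⟩ : ∃ L, ∀ p ∈ closure (U ×ˢ V), ‖p.1 - p.2‖ < L := by
    obtain ⟨L, -, hL⟩ := (hUb.prod hVb).closure.exists_pos_norm_lt
    refine ⟨2 * L, fun p hp => ?_⟩
    linarith [norm_sub_le p.1 p.2, norm_fst_le p, norm_snd_le p, hL p hp]
  have hperturbed : ∀ ε > 0, (u p.1)⁺ * (v p.2)⁺ ≤ K * perturbedId ε L ‖p.1 - p.2‖ ^ 2 := by
    intro ε hε
    refine posPart_mul_posPart_le_mul_sq_of_concave hu hv hUo hVo hUb hVb hUV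
      (contDiff_perturbedId ε L) (fun q hq => ?_) (fun s => ?_) hK (fun q hq => ?_) hp
    · have : ‖q.1 - q.2‖ ^ 2 < L ^ 2 := by gcongr; exact hL q hq
      exact add_pos_of_nonneg_of_pos (norm_nonneg _) (mul_pos hε (sub_pos.2 this))
    · linarith [iteratedDeriv_two_perturbedId ε L s]
    · refine (hbd q hq).trans ?_
      gcongr
      exact le_perturbedId hε.le (norm_nonneg _) (hL q (frontier_subset_closure hq)).le
  have hlim : Tendsto (fun ε => K * perturbedId ε L ‖p.1 - p.2‖ ^ 2) (𝓝[>] 0)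
      (𝓝 (K * ‖p.1 - p.2‖ ^ 2)) := by
    unfold perturbedId
    exact (Continuous.tendsto' (by fun_prop) _ _ (by simp)).mono_left nhdsWithin_le_nhds
  exact ge_of_tendsto hlim (eventually_mem_nhdsWithin.mono hperturbed)

-- On `frontier (U ×ˢ V)` the product vanishes or the two points are at least `δ` apart.
theorem posPart_mul_posPart_le_of_le_norm_sub [Nontrivial E] {δ : ℝ} (hδ : 0 < δ)
    (hu : SubharmonicContOnCl u U) (hv : SubharmonicContOnCl v V) (hUo : IsOpen U) (hVo : IsOpen V)
    (hUb : Bornology.IsBounded U) (hVb : Bornology.IsBounded V) (hUV : Disjoint U V)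
    (hu₁ : ∀ x ∈ frontier U, u x ≤ 1) (hv₁ : ∀ y ∈ frontier V, v y ≤ 1)
    (hUδ : ∀ x ∈ frontier U, 0 < u x → ∀ y ∈ closure V, δ ≤ ‖x - y‖)
    (hVδ : ∀ y ∈ frontier V, 0 < v y → ∀ x ∈ closure U, δ ≤ ‖x - y‖)
    {x y : E} (hx : x ∈ closure U) (hy : y ∈ closure V) :
    (u x)⁺ * (v y)⁺ ≤ (δ ^ 2)⁻¹ * ‖x - y‖ ^ 2 := by
  have hfar {z w : E} (hz : z ∈ closure U) (hw : w ∈ closure V) (hdist : δ ≤ ‖z - w‖) :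
      (u z)⁺ * (v w)⁺ ≤ (δ ^ 2)⁻¹ * ‖z - w‖ ^ 2 := by
    have huz : (u z)⁺ ≤ 1 :=
      sup_le (hu.le_of_forall_mem_frontier_le hUo hUb hu₁ hz) zero_le_one
    have hvw : (v w)⁺ ≤ 1 :=
      sup_le (hv.le_of_forall_mem_frontier_le hVo hVb hv₁ hw) zero_le_one
    calc
      (u z)⁺ * (v w)⁺ ≤ 1 := mul_le_one₀ huz (posPart_nonneg _) hvw
      _ = (δ ^ 2)⁻¹ * δ ^ 2 := (inv_mul_cancel₀ (by positivity)).symm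
      _ ≤ (δ ^ 2)⁻¹ * ‖z - w‖ ^ 2 := by gcongr
  refine posPart_mul_posPart_le_mul_norm_sub_sq (p := (x, y)) hu hv hUo hVo hUb hVb hUV
    (by positivity) ?_ (by rw [closure_prod_eq]; exact ⟨hx, hy⟩)
  rintro ⟨z, w⟩ hzw
  rw [frontier_prod_eq] at hzw
  obtain ⟨hz, hw⟩ | ⟨hz, hw⟩ := hzw
  · obtain hvw | hvw := le_or_gt (v w) 0
    · simp only [posPart_eq_zero.2 hvw, mul_zero]
      positivity
    · exact hfar hz (frontier_subset_closure hw) (hVδ w hw hvw z hz)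
  · obtain huz | huz := le_or_gt (u z) 0
    · simp only [posPart_eq_zero.2 huz, zero_mul]
      positivity
    · exact hfar (frontier_subset_closure hz) hw (hUδ z hz huz w hw)

end TwoPoint

end MaximumPrinciple

section Radial

variable {E : Type*} [NormedAddCommGroup E] [NormedSpace ℝ E] {s : Set E} {x : E} {r : ℝ}

lemma norm_smul_inv_norm_smul (hx : x ≠ 0) (hr : 0 ≤ r) : ‖r • (‖x‖⁻¹ • x)‖ = r := by
  rw [norm_smul, norm_smul, norm_inv, norm_norm, inv_mul_cancel₀ (norm_ne_zero_iff.2 hx), mul_one,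
    Real.norm_of_nonneg hr]

lemma sub_smul_inv_norm_smul_mem_closure (hs : StarConvex ℝ 0 s) (hx : x ∈ closure s) (hr : 0 ≤ r)
    (hrx : r ≤ ‖x‖) : x - r • (‖x‖⁻¹ • x) ∈ closure s := by
  have hscale : x - r • (‖x‖⁻¹ • x) = (1 - r / ‖x‖) • x := by module
  rw [hscale]
  refine MapsTo.closure (fun y hy => hs.smul_mem hy ?_ ?_) (continuous_const_smul _) hx
  · exact sub_nonneg.2 (div_le_one_of_le₀ hrx (norm_nonneg x))
  · exact sub_le_self 1 (by positivity)

lemma add_smul_inv_norm_smul_notMem (hs : StarConvex ℝ 0 s) (hx : x ∉ s) (hr : 0 ≤ r) :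
    x + r • (‖x‖⁻¹ • x) ∉ s := by
  have hscale : x + r • (‖x‖⁻¹ • x) = (1 + r / ‖x‖) • x := by module
  have hone : 1 ≤ 1 + r / ‖x‖ := le_add_of_nonneg_right (by positivity)
  rw [hscale]
  intro hmem
  have h := hs.smul_mem hmem (inv_nonneg.2 (zero_le_one.trans hone)) (inv_le_one_of_one_le₀ hone)
  rw [inv_smul_smul₀ (zero_lt_one.trans_le hone).ne'] at h
  exact hx h

end Radial

section Annulus

variable {E : Type*} [NormedAddCommGroup E] [InnerProductSpace ℝ E] [FiniteDimensional ℝ E]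
  {u v : E → ℝ} {Ω : Set E} {ρ σ δ r : ℝ}

lemma frontier_sdiff_closedBall_subset {X : Type*} [PseudoMetricSpace X] (Ω : Set X) (x : X)
    (ρ : ℝ) : frontier (Ω \ closedBall x ρ) ⊆ frontier Ω ∪ sphere x ρ := by
  rw [sdiff_eq]
  refine (frontier_inter_subset _ _).trans (union_subset_union inter_subset_left ?_)
  rw [frontier_compl]
  exact inter_subset_right.trans frontier_closedBall_subset_sphere

lemma frontier_ball_sdiff_closure_subset {X : Type*} [PseudoMetricSpace X] (Ω : Set X) (x : X)
    (ρ : ℝ) : frontier (ball x ρ \ closure Ω) ⊆ frontier Ω ∪ sphere x ρ := by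
  rw [sdiff_eq, union_comm]
  refine (frontier_inter_subset _ _).trans (union_subset_union
    (inter_subset_left.trans frontier_ball_subset_sphere) ?_)
  rw [frontier_compl]
  exact inter_subset_right.trans frontier_closure_subset

theorem posPart_mul_posPart_le_of_annulus [Nontrivial E] (hδ : 0 < δ) (hΩo : IsOpen Ω)
    (hρΩ : ball 0 (ρ + δ) ⊆ Ω) (hΩσ : Ω ⊆ ball 0 σ)
    (hu : SubharmonicContOnCl u (Ω \ closedBall 0 ρ))
    (hu₀ : ∀ x ∈ frontier Ω, u x ≤ 0) (hu₁ : ∀ x ∈ sphere 0 ρ, u x ≤ 1)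
    (hv : SubharmonicContOnCl v (ball 0 (σ + δ) \ closure Ω))
    (hv₀ : ∀ x ∈ frontier Ω, v x ≤ 0) (hv₁ : ∀ x ∈ sphere 0 (σ + δ), v x ≤ 1)
    {x y : E} (hx : x ∈ closure (Ω \ closedBall 0 ρ))
    (hy : y ∈ closure (ball 0 (σ + δ) \ closure Ω)) :
    (u x)⁺ * (v y)⁺ ≤ (δ ^ 2)⁻¹ * ‖x - y‖ ^ 2 := by
  have hfrU := frontier_sdiff_closedBall_subset Ω (0 : E) ρ
  have hfrV := frontier_ball_sdiff_closure_subset Ω (0 : E) (σ + δ)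
  have hnormU {z : E} (hz : z ∈ closure (Ω \ closedBall 0 ρ)) : ‖z‖ ≤ σ :=
    mem_closedBall_zero_iff.1 <|
      closure_minimal (sdiff_subset.trans (hΩσ.trans ball_subset_closedBall)) isClosed_closedBall hz
  have hnormV {w : E} (hw : w ∈ closure (ball 0 (σ + δ) \ closure Ω)) : ρ + δ ≤ ‖w‖ := by
    have hsub : ball 0 (σ + δ) \ closure Ω ⊆ (ball 0 (ρ + δ))ᶜ := fun w hw hwρ =>
      hw.2 (subset_closure (hρΩ hwρ))
    simpa using closure_minimal hsub isOpen_ball.isClosed_compl hw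
  refine posPart_mul_posPart_le_of_le_norm_sub hδ hu hv (hΩo.sdiff isClosed_closedBall)
    (isOpen_ball.sdiff isClosed_closure) (isBounded_ball.subset (sdiff_subset.trans hΩσ))
    (isBounded_ball.subset sdiff_subset)
    (disjoint_sdiff_right.mono_left (sdiff_subset.trans subset_closure))
    (fun z hz => (hfrU hz).elim (fun h => (hu₀ z h).trans zero_le_one) (hu₁ z))
    (fun w hw => (hfrV hw).elim (fun h => (hv₀ w h).trans zero_le_one) (hv₁ w)) ?_ ?_ hx hy
  · intro z hz huz w hw
    have hzρ := mem_sphere_zero_iff_norm.1 ((hfrU hz).resolve_left fun h => (hu₀ z h).not_gt huz)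
    linarith [hnormV hw, norm_sub_norm_le w z, norm_sub_rev z w]
  · intro w hw hvw z hz
    have hwσ := mem_sphere_zero_iff_norm.1 ((hfrV hw).resolve_left fun h => (hv₀ w h).not_gt hvw)
    linarith [hnormU hz, norm_sub_norm_le w z, norm_sub_rev z w]

theorem posPart_mul_posPart_radial_le (hρ : 0 ≤ ρ) (hΩo : IsOpen Ω) (hρΩ : ball 0 (ρ + δ) ⊆ Ω)
    (hΩσ : Ω ⊆ ball 0 σ) (hΩstar : StarConvex ℝ 0 Ω)
    (hu : SubharmonicContOnCl u (Ω \ closedBall 0 ρ))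
    (hu₀ : ∀ x ∈ frontier Ω, u x ≤ 0) (hu₁ : ∀ x ∈ sphere 0 ρ, u x ≤ 1)
    (hv : SubharmonicContOnCl v (ball 0 (σ + δ) \ closure Ω))
    (hv₀ : ∀ x ∈ frontier Ω, v x ≤ 0) (hv₁ : ∀ x ∈ sphere 0 (σ + δ), v x ≤ 1)
    {x₀ : E} (hx₀ : x₀ ∈ frontier Ω) (hr : 0 < r) (hrδ : r < δ) :
    (u (x₀ - r • (‖x₀‖⁻¹ • x₀)))⁺ * (v (x₀ + r • (‖x₀‖⁻¹ • x₀)))⁺ ≤ 4 * r ^ 2 / δ ^ 2 := by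
  have hx₀cl : x₀ ∈ closure Ω := frontier_subset_closure hx₀
  have hx₀Ω : x₀ ∉ Ω := fun h => hΩo.inter_frontier_eq.subset ⟨h, hx₀⟩
  have hx₀ρ : ρ + δ ≤ ‖x₀‖ := by simpa using fun h => hx₀Ω (hρΩ h)
  have hx₀σ : ‖x₀‖ ≤ σ :=
    mem_closedBall_zero_iff.1 (closure_ball_subset_closedBall (closure_mono hΩσ hx₀cl))
  have hrx₀ : r < ‖x₀‖ := by linarith
  have hx₀ne : x₀ ≠ 0 := norm_pos_iff.1 (hr.trans hrx₀)
  have : Nontrivial E := ⟨x₀, 0, hx₀ne⟩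
  have hre := norm_smul_inv_norm_smul hx₀ne hr.le
  have hinner := sub_smul_inv_norm_smul_mem_closure hΩstar hx₀cl hr.le hrx₀.le
  have houter := add_smul_inv_norm_smul_notMem hΩstar hx₀Ω hr.le
  set w := r • (‖x₀‖⁻¹ • x₀)
  by_cases hcl : x₀ + w ∈ closure Ω
  · rw [posPart_eq_zero.2 (hv₀ _ (hΩo.frontier_eq ▸ ⟨hcl, houter⟩)), mul_zero]
    positivity
  have hU : x₀ - w ∈ closure (Ω \ closedBall 0 ρ) := by
    refine isClosed_closedBall.isOpen_compl.closure_inter ⟨hinner, ?_⟩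
    have hnorm : ρ < ‖x₀ - w‖ := by linarith [norm_sub_norm_le x₀ w]
    simpa using hnorm
  have hV : x₀ + w ∈ ball 0 (σ + δ) \ closure Ω :=
    ⟨mem_ball_zero_iff.2 (by linarith [norm_add_le x₀ w]), hcl⟩
  have hdist : ‖(x₀ - w) - (x₀ + w)‖ = 2 * r := by
    rw [show (x₀ - w) - (x₀ + w) = -((2 : ℝ) • w) by module, norm_neg, norm_smul, hre,
      Real.norm_two]
  calc
    _ ≤ (δ ^ 2)⁻¹ * ‖(x₀ - w) - (x₀ + w)‖ ^ 2 :=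
      posPart_mul_posPart_le_of_annulus (hr.trans hrδ) hΩo hρΩ hΩσ hu hu₀ hu₁ hv hv₀ hv₁ hU
        (subset_closure hV)
    _ = 4 * r ^ 2 / δ ^ 2 := by
      rw [hdist]
      ring

theorem stmt0_general (hρ : 0 ≤ ρ) (hΩo : IsOpen Ω) (hρΩ : ball 0 (ρ + δ) ⊆ Ω)
    (hΩσ : Ω ⊆ ball 0 σ) (hΩstar : StarConvex ℝ 0 Ω)
    (hu : SubharmonicContOnCl u (Ω \ closedBall 0 ρ))
    (hu₀ : ∀ x ∈ frontier Ω, u x ≤ 0) (hu₁ : ∀ x ∈ sphere 0 ρ, u x ≤ 1)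
    (hv : SubharmonicContOnCl v (ball 0 (σ + δ) \ closure Ω))
    (hv₀ : ∀ x ∈ frontier Ω, v x ≤ 0) (hv₁ : ∀ x ∈ sphere 0 (σ + δ), v x ≤ 1)
    {x₀ : E} (hx₀ : x₀ ∈ frontier Ω) (hr : 0 < r) (hrδ : r < δ)
    (hur : 4 / δ ^ 2 ≤ u (x₀ - r • (‖x₀‖⁻¹ • x₀)) / r) :
    v (x₀ + r • (‖x₀‖⁻¹ • x₀)) / r ≤ 1 := by
  have hδ : 0 < δ := hr.trans hrδ
  rw [le_div_iff₀ hr] at hur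
  rw [div_le_one hr]
  refine (le_posPart _).trans (le_of_mul_le_mul_left ?_ (show 0 < 4 / δ ^ 2 * r by positivity))
  calc
    4 / δ ^ 2 * r * (v (x₀ + r • (‖x₀‖⁻¹ • x₀)))⁺ ≤
        (u (x₀ - r • (‖x₀‖⁻¹ • x₀)))⁺ * (v (x₀ + r • (‖x₀‖⁻¹ • x₀)))⁺ := by
      gcongr
      exact hur.trans (le_posPart _)
    _ ≤ 4 * r ^ 2 / δ ^ 2 :=
      posPart_mul_posPart_radial_le hρ hΩo hρΩ hΩσ hΩstar hu hu₀ hu₁ hv hv₀ hv₁ hx₀ hr hrδ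
    _ = 4 / δ ^ 2 * r * r := by ring

end Annulus

section Euclidean

variable {n : ℕ} {f : EuclideanSpace ℝ (Fin n) → ℝ}

lemma lapl_eq_laplacian {x : EuclideanSpace ℝ (Fin n)} (hf : ContDiffAt ℝ 2 f x) :
    lapl f x = Δ f x := by
  rw [laplacian_eq_iteratedFDeriv_orthonormalBasis f (EuclideanSpace.basisFun (Fin n) ℝ), lapl]
  refine Finset.sum_congr rfl fun i _ => ?_
  rw [fderiv_clm_apply (differentiableAt_fderiv_of_contDiffAt_two hf) (differentiableAt_const _)]
  simp [iteratedFDeriv_two_apply]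

lemma IsHarmonicOn.subharmonicContOnCl {U : Set (EuclideanSpace ℝ (Fin n))} (hf : IsHarmonicOn f U)
    (hU : IsOpen U) (hc : ContinuousOn f (closure U)) : SubharmonicContOnCl f U where
  contDiffAt x hx := hf.1.contDiffAt (hU.mem_nhds hx)
  laplacian_nonneg x hx := by
    rw [← lapl_eq_laplacian (hf.1.contDiffAt (hU.mem_nhds hx)), hf.2 x hx]
  continuousOn := hc

end Euclidean

theorem stmt0 (n : ℕ) (hn : 3 ≤ n) :
    ∃ M : ℝ, 0 < M ∧
      ∀ (Ω₀ : Set (EuclideanSpace ℝ (Fin n))) (hp hm : EuclideanSpace ℝ (Fin n) → ℝ),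
        IsOpen Ω₀ → Bornology.IsBounded Ω₀ →
        ball (0 : EuclideanSpace ℝ (Fin n)) (4/3) ⊆ Ω₀ →
        Ω₀ ⊆ ball (0 : EuclideanSpace ℝ (Fin n)) (5/3) →
        (∀ y ∈ ball (0 : EuclideanSpace ℝ (Fin n)) 1, ∀ x ∈ Ω₀, segment ℝ y x ⊆ Ω₀) →
        ContinuousOn hp (closure (Ω₀ \ closedBall 0 1)) →
        IsHarmonicOn hp (Ω₀ \ closedBall 0 1) →
        (∀ x ∈ frontier Ω₀, hp x = 0) →
        (∀ x ∈ sphere (0 : EuclideanSpace ℝ (Fin n)) 1, hp x = 1) →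
        ContinuousOn hm (closure (ball (0 : EuclideanSpace ℝ (Fin n)) 2 \ closure Ω₀)) →
        IsHarmonicOn hm (ball 0 2 \ closure Ω₀) →
        (∀ x ∈ frontier Ω₀, hm x = 0) →
        (∀ x ∈ sphere (0 : EuclideanSpace ℝ (Fin n)) 2, hm x = 1) →
        ∀ x₀ ∈ frontier Ω₀, ∀ r : ℝ, 0 < r → r ≤ 1/6 →
          M ≤ hp (x₀ - r • (‖x₀‖⁻¹ • x₀)) / r →
          hm (x₀ + r • (‖x₀‖⁻¹ • x₀)) / r ≤ 1 := by
  refine ⟨36, by norm_num, fun Ω u v hΩo _ hball hΩ hstar hcu hu hu₀ hu₁ hcv hv hv₀ hv₁ x₀ hx₀ r hr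
    hr6 hM => ?_⟩
  have hΩstar : StarConvex ℝ 0 Ω :=
    starConvex_iff_segment_subset.2 fun x hx => hstar 0 (mem_ball_self one_pos) x hx
  have hσ : (5 / 3 : ℝ) + 1 / 3 = 2 := by norm_num
  exact stmt0_general (ρ := 1) (σ := 5 / 3) (δ := 1 / 3) zero_le_one hΩo
    (by norm_num; exact hball) hΩ hΩstar
    (hu.subharmonicContOnCl (hΩo.sdiff isClosed_closedBall) hcu) (fun x hx => (hu₀ x hx).le)
    (fun x hx => (hu₁ x hx).le)
    (hσ ▸ hv.subharmonicContOnCl (isOpen_ball.sdiff isClosed_closure) hcv)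
    (fun x hx => (hv₀ x hx).le) (fun x hx => (hv₁ x (hσ ▸ hx)).le) hx₀ hr (by linarith)
    (by norm_num; exact hM)
end

section
/- Let U ⊆ ℝⁿ be open and let w : U → ℝ be continuous and superharmonic in the mean-value sense: for every x ∈ U and s > 0 with cl(B_s(x)) ⊆ U, w(x) ≥ (average of w over B_s(x)). For ρ > 0 define Φ(x) = inf{w(y) : |y − x| ≤ ρ} on the open set U_ρ = {x : cl(B_ρ(x)) ⊆ U, x in the interior of that set}. Then Φ is continuous and superharmonic in the mean-value sense on U_ρ. -/
open Metric Set MeasureTheory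

/-!
Write `Φ x = min {w (x + e) : e ∈ K}`. If the minimum at `x` is attained at `e`, then the translate
`w (· + e)`, which is again superharmonic, lies above `Φ` and touches it at `x`, so the mean-value
inequality at `x` passes from the translate to `Φ`. Continuity of `Φ` holds because a minimum over
a compact parameter set depends continuously on the remaining variable.
-/

open scoped Pointwise

lemma continuousOn_sInf_image_of_isCompact {X Y R : Type*} [TopologicalSpace X] [TopologicalSpace Y]
    [ConditionallyCompleteLinearOrder R] [TopologicalSpace R] [OrderTopology R]
    {f : X → Y → R} {S : Set X} {K : Set Y} (hK : IsCompact K)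
    (hf : ContinuousOn (fun p : X × Y => f p.1 p.2) (S ×ˢ K)) :
    ContinuousOn (fun x => sInf (f x '' K)) S := by
  have : CompactSpace K := isCompact_iff_compactSpace.1 hK
  have hcont : Continuous ↿(fun (x : S) (y : K) => f x y) :=
    hf.comp_continuous (f := fun p : S × K => ((p.1 : X), (p.2 : Y))) (by fun_prop)
      fun p => ⟨p.1.2, p.2.2⟩
  have himage (x : S) : (fun y : K => f x y) '' univ = f x '' K := by
    rw [image_univ, image_eq_range]
  rw [continuousOn_iff_continuous_domRestrict]
  simpa only [himage, domRestrict_def] using isCompact_univ.continuous_sInf hcont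

section TranslateInf

variable {E : Type*} [Add E]

/-- The infimum of `w` over the translate `x + K`, as a function of `x`. For `K = closedBall 0 ρ` it
is the inf-convolution `x ↦ inf {w y : |y - x| ≤ ρ}`. It takes the junk value `0` where `w` is
unbounded below on `x + K`, and everywhere if `K` is empty. -/
noncomputable def translateInf (K : Set E) (w : E → ℝ) (x : E) : ℝ :=
  sInf (w '' (x +ᵥ K))

variable [TopologicalSpace E] [ContinuousAdd E] {U K : Set E} {w : E → ℝ} {x e : E}

lemma translateInf_le (hK : IsCompact K) (hw : ContinuousOn w U) (hx : x +ᵥ K ⊆ U) (he : e ∈ K) :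
    translateInf K w x ≤ w (x + e) :=
  csInf_le ((hK.vadd x).bddBelow_image (hw.mono hx)) (mem_image_of_mem w (vadd_mem_vadd_set he))

lemma exists_translateInf_eq (hK : IsCompact K) (hne : K.Nonempty) (hw : ContinuousOn w U)
    (hx : x +ᵥ K ⊆ U) : ∃ e ∈ K, translateInf K w x = w (x + e) := by
  obtain ⟨_, ⟨e, he, rfl⟩, hmin⟩ := (hK.vadd x).exists_sInf_image_eq hne.vadd_set (hw.mono hx)
  exact ⟨e, he, hmin⟩

lemma continuousOn_translateInf (hK : IsCompact K) (hw : ContinuousOn w U) :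
    ContinuousOn (translateInf K w) {x | x +ᵥ K ⊆ U} := by
  have heq : translateInf K w = fun x => sInf ((fun e => w (x + e)) '' K) :=
    funext fun x => congrArg sInf (image_image w (x + ·) K)
  rw [heq]
  exact continuousOn_sInf_image_of_isCompact hK <|
    hw.comp (by fun_prop) fun _ hp => hp.1 (vadd_mem_vadd_set hp.2)

end TranslateInf

lemma translateInf_closedBall_zero {E : Type*} [SeminormedAddCommGroup E] (ρ : ℝ) (w : E → ℝ) :
    translateInf (closedBall 0 ρ) w = fun x => sInf (w '' closedBall x ρ) := by
  simp only [funext_iff, translateInf, vadd_closedBall_zero, implies_true]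

lemma setAverage_mono_on {α : Type*} [MeasurableSpace α] {μ : Measure α} {f g : α → ℝ} {s : Set α}
    (hf : IntegrableOn f s μ) (hg : IntegrableOn g s μ) (hs : MeasurableSet s)
    (hfg : ∀ x ∈ s, f x ≤ g x) : ⨍ x in s, f x ∂μ ≤ ⨍ x in s, g x ∂μ := by
  simp only [setAverage_eq, smul_eq_mul]
  exact mul_le_mul_of_nonneg_left (setIntegral_mono_on hf hg hs hfg)
    (inv_nonneg.2 measureReal_nonneg)

lemma setAverage_ball_comp_add_right {E F : Type*} [SeminormedAddCommGroup E] [MeasurableSpace E]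
    [BorelSpace E] [NormedAddCommGroup F] [NormedSpace ℝ F] {μ : Measure E}
    [μ.IsAddRightInvariant] (w : E → F) (x e : E) (s : ℝ) :
    ⨍ y in ball x s, w (y + e) ∂μ = ⨍ y in ball (x + e) s, w y ∂μ := by
  have hpre : ball x s = (· + e) ⁻¹' ball (x + e) s := by simp
  have hμ := measurePreserving_add_right μ e
  rw [setAverage_eq, setAverage_eq, hpre,
    hμ.setIntegral_preimage_emb (measurableEmbedding_addRight e),
    hμ.measureReal_preimage measurableSet_ball.nullMeasurableSet]

section MeanSuperharmonicOn

variable {X : Type*} [PseudoMetricSpace X] [MeasurableSpace X] {μ : Measure X} {U V : Set X}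
  {v w : X → ℝ}

/-- Superharmonicity of `w` on `U` in the mean-value sense, with averages over balls taken with
respect to `μ`. Only balls whose closed ball stays in `U` are tested. -/
def MeanSuperharmonicOn (μ : Measure X) (w : X → ℝ) (U : Set X) : Prop :=
  ∀ x ∈ U, ∀ s : ℝ, 0 < s → closedBall x s ⊆ U → (⨍ y in ball x s, w y ∂μ) ≤ w x

lemma MeanSuperharmonicOn.mono (hw : MeanSuperharmonicOn μ w U) (hVU : V ⊆ U) :
    MeanSuperharmonicOn μ w V :=
  fun x hx s hs hxs => hw x (hVU hx) s hs (hxs.trans hVU)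

lemma meanSuperharmonicOn_of_touching_above [ProperSpace X] [BorelSpace X]
    [IsFiniteMeasureOnCompacts μ] (hv : ContinuousOn v U)
    (htouch : ∀ x ∈ U, ∃ u, ContinuousOn u U ∧ MeanSuperharmonicOn μ u U ∧
      u x = v x ∧ ∀ y ∈ U, v y ≤ u y) :
    MeanSuperharmonicOn μ v U := by
  intro x hx s hs hxs
  obtain ⟨u, hu, hsuper, hux, hle⟩ := htouch x hx
  have hint {f : X → ℝ} (hf : ContinuousOn f U) : IntegrableOn f (ball x s) μ :=
    ((hf.mono hxs).integrableOn_compact' (isCompact_closedBall x s)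
      measurableSet_closedBall).mono_set ball_subset_closedBall
  calc ⨍ y in ball x s, v y ∂μ
      ≤ ⨍ y in ball x s, u y ∂μ :=
        setAverage_mono_on (hint hv) (hint hu) measurableSet_ball
          fun y hy => hle y (hxs (ball_subset_closedBall hy))
    _ ≤ u x := hsuper x hx s hs hxs
    _ = v x := hux

end MeanSuperharmonicOn

section Translation

variable {E : Type*} [SeminormedAddCommGroup E] [MeasurableSpace E] [BorelSpace E] {μ : Measure E}
  [μ.IsAddRightInvariant] {U K : Set E} {w : E → ℝ}

lemma MeanSuperharmonicOn.comp_add_right (hw : MeanSuperharmonicOn μ w U) (e : E) :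
    MeanSuperharmonicOn μ (fun y => w (y + e)) ((· + e) ⁻¹' U) := by
  intro x hx s hs hxs
  have hball : closedBall (x + e) s ⊆ U := by
    rwa [← image_subset_iff, image_add_right, preimage_add_right_closedBall, sub_neg_eq_add]
      at hxs
  rw [setAverage_ball_comp_add_right]
  exact hw (x + e) hx s hs hball

lemma MeanSuperharmonicOn.translateInf [ProperSpace E] [IsFiniteMeasureOnCompacts μ]
    (hw : MeanSuperharmonicOn μ w U) (hcont : ContinuousOn w U) (hK : IsCompact K)
    (hne : K.Nonempty) : MeanSuperharmonicOn μ (translateInf K w) {x | x +ᵥ K ⊆ U} := by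
  refine meanSuperharmonicOn_of_touching_above (continuousOn_translateInf hK hcont) fun x hx => ?_
  obtain ⟨e, he, hmin⟩ := exists_translateInf_eq hK hne hcont hx
  have hmaps : {x | x +ᵥ K ⊆ U} ⊆ (· + e) ⁻¹' U := fun y hy => hy (vadd_mem_vadd_set he)
  exact ⟨fun y => w (y + e), hcont.comp (by fun_prop) hmaps, (hw.comp_add_right e).mono hmaps,
    hmin.symm, fun y hy => translateInf_le hK hcont hy he⟩

theorem stmt7_general [ProperSpace E] [IsFiniteMeasureOnCompacts μ] (hK : IsCompact K)
    (hne : K.Nonempty) (hcont : ContinuousOn w U) (hsuper : MeanSuperharmonicOn μ w U) :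
    ContinuousOn (translateInf K w) {x | x +ᵥ K ⊆ U} ∧
      MeanSuperharmonicOn μ (translateInf K w) {x | x +ᵥ K ⊆ U} :=
  ⟨continuousOn_translateInf hK hcont, hsuper.translateInf hcont hK hne⟩

end Translation

theorem stmt7 (n : ℕ) (U : Set (EuclideanSpace ℝ (Fin n)))
    (w : EuclideanSpace ℝ (Fin n) → ℝ) (ρ : ℝ)
    (hU : IsOpen U) (hρ : 0 < ρ)
    (hcont : ContinuousOn w U)
    (hsuper : ∀ x ∈ U, ∀ s : ℝ, 0 < s → closedBall x s ⊆ U →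
      (⨍ y in ball x s, w y) ≤ w x) :
    ContinuousOn (fun x => sInf (w '' closedBall x ρ))
      (interior {x | closedBall x ρ ⊆ U}) ∧
    ∀ x ∈ interior {x | closedBall x ρ ⊆ U}, ∀ s : ℝ, 0 < s →
      closedBall x s ⊆ interior {x | closedBall x ρ ⊆ U} →
      (⨍ y in ball x s, sInf (w '' closedBall y ρ)) ≤ sInf (w '' closedBall x ρ) := by
  have hΦ := stmt7_general (isCompact_closedBall 0 ρ) (nonempty_closedBall.2 hρ.le) hcont hsuper
  simp only [translateInf_closedBall_zero, vadd_closedBall_zero] at hΦ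
  exact ⟨hΦ.1.mono interior_subset, hΦ.2.mono interior_subset⟩
end
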